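/- arXiv:2406.17341 — 5 statements merged into one kernel-verified Lean document; each statement's English description precedes it below -/
import Mathlib

section
/- Let P be an edge-deletion invariant predicate on simple graphs on a finite vertex type V, let Gt ≤ Ĝ be simple graphs on V with P(Gt). Then every minimizer G* of the edge edit distance d(Ĝ, ·) over the constraint set C = {G : P(G) and Gt ≤ G} can be recovered by the projector: there exists a list l enumerating the candidate edge set E_cand = (edges of Ĝ) \ (edges of Gt) without repetition such that the projector with edge ordering l outputs G*. (Labeled-graph version of Theorem 1: G* ∈ 𝒢^{t−1} = Projector(P, Ĝ, Gt) for a suitable insertion order.) -/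
open SimpleGraph

/-- Edge edit distance between two labeled simple graphs on the same vertex set:
the cardinality of the symmetric difference of their edge sets. -/
noncomputable def editDist {V : Type*} (G₁ G₂ : SimpleGraph V) : ℕ :=
  (symmDiff G₁.edgeSet G₂.edgeSet).ncard

-- One step of the projector: insert the edge `e` into the current graph `G`
-- iff the resulting graph satisfies `P`.
open Classical in
noncomputable def projStep {V : Type*} (P : SimpleGraph V → Prop)
    (G : SimpleGraph V) (e : Sym2 V) : SimpleGraph V :=
  if P (G ⊔ SimpleGraph.fromEdgeSet {e}) then G ⊔ SimpleGraph.fromEdgeSet {e} else G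

/-- The projector with edge ordering `l`: starting from `Gt`, process the edges
of `l` in order, inserting an edge exactly when the graph obtained by inserting
it satisfies `P`. -/
noncomputable def projector {V : Type*} (P : SimpleGraph V → Prop)
    (Gt : SimpleGraph V) (l : List (Sym2 V)) : SimpleGraph V :=
  l.foldl (projStep P) Gt

/-!
A graph between `Ghat ⊓ Gstar` and `Ghat ⊔ Gstar` is strictly closer to `Ghat` than `Gstar`,
unless it equals `Gstar`. Intersecting a minimizer with `Gt ⊔ Ghat` gives a feasible graph of
this kind, and so does any feasible enlargement inside `Gt ⊔ Ghat`; hence a minimizer is a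
maximal feasible subgraph of `Gt ⊔ Ghat`. The projector recovers such a graph when offered its
own edges first: each is accepted, since only subgraphs of a feasible graph arise, and each
later candidate is rejected by maximality.
-/

theorem exists_nodup_list_mem_iff {α : Type*} {s : Set α} (hs : s.Finite) :
    ∃ l : List α, l.Nodup ∧ ∀ a, a ∈ l ↔ a ∈ s :=
  ⟨hs.toFinset.toList, Finset.nodup_toList _, by simp⟩

theorem symmDiff_lt_symmDiff_of_between {α : Type*} [GeneralizedBooleanAlgebra α] {a b c : α}
    (hinf : a ⊓ c ≤ b) (hsup : b ≤ a ⊔ c) (hne : b ≠ c) : symmDiff a b < symmDiff a c := by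
  refine lt_of_le_of_ne ?_ (mt symmDiff_right_inj.mp hne)
  rw [symmDiff_eq_sup_sdiff_inf, symmDiff_eq_sup_sdiff_inf]
  exact sdiff_le_sdiff (sup_le le_sup_left hsup) (le_inf inf_le_left hinf)

section

variable {V : Type*} {P : SimpleGraph V → Prop}

theorem editDist_lt_editDist_of_between {G H S : SimpleGraph V}
    (hfin : (symmDiff G.edgeSet S.edgeSet).Finite)
    (hinf : G ⊓ S ≤ H) (hsup : H ≤ G ⊔ S) (hne : H ≠ S) : editDist G H < editDist G S := by
  refine Set.ncard_lt_ncard (symmDiff_lt_symmDiff_of_between ?_ ?_ (edgeSet_injective.ne hne)) hfin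
  · exact (edgeSet_inf G S).ge.trans (edgeSet_mono hinf)
  · exact (edgeSet_mono hsup).trans (edgeSet_sup G S).le

theorem maximal_of_forall_editDist_le (hP : Antitone P) {Gt Ghat S : SimpleGraph V}
    (hS : P S) (hGt : Gt ≤ S) (hfin : (symmDiff Ghat.edgeSet S.edgeSet).Finite)
    (hmin : ∀ H, P H → Gt ≤ H → editDist Ghat S ≤ editDist Ghat H) :
    Maximal (fun G ↦ P G ∧ G ≤ Gt ⊔ Ghat) S := by
  have eq_of_between {H : SimpleGraph V} (hH : P H) (hGtH : Gt ≤ H) (hinf : Ghat ⊓ S ≤ H)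
      (hsup : H ≤ Ghat ⊔ S) : H = S := by
    by_contra hne
    exact (editDist_lt_editDist_of_between hfin hinf hsup hne).not_ge (hmin H hH hGtH)
  have inf_eq : S ⊓ (Gt ⊔ Ghat) = S :=
    eq_of_between (hP inf_le_left hS) (le_inf hGt le_sup_left)
      (le_inf inf_le_right (inf_le_left.trans le_sup_right)) (inf_le_left.trans le_sup_right)
  refine ⟨⟨hS, inf_eq_left.mp inf_eq⟩, fun H ⟨hH, hHle⟩ hSH ↦ (eq_of_between hH ?_ ?_ ?_).le⟩
  · exact hGt.trans hSH
  · exact inf_le_right.trans hSH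
  · exact hHle.trans (sup_le (hGt.trans le_sup_right) le_sup_left)

theorem projector_append (G : SimpleGraph V) (l₁ l₂ : List (Sym2 V)) :
    projector P G (l₁ ++ l₂) = projector P (projector P G l₁) l₂ :=
  List.foldl_append

theorem projector_eq_sup (hP : Antitone P) {G : SimpleGraph V} {l : List (Sym2 V)}
    (h : P (G ⊔ fromEdgeSet {e | e ∈ l})) : projector P G l = G ⊔ fromEdgeSet {e | e ∈ l} := by
  induction l generalizing G with
  | nil => simp [projector]
  | cons e l ih =>
    have sup_cons : G ⊔ fromEdgeSet {a | a ∈ e :: l} =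
        G ⊔ fromEdgeSet {e} ⊔ fromEdgeSet {a | a ∈ l} := by
      rw [sup_assoc, ← fromEdgeSet_union]
      simp only [List.mem_cons, Set.ofPred_or, Set.ofPred_eq_eq_singleton]
    rw [sup_cons] at h ⊢
    have step : projStep P G e = G ⊔ fromEdgeSet {e} := if_pos (hP le_sup_left h)
    calc
      projector P G (e :: l) = projector P (projStep P G e) l := rfl
      _ = projector P (G ⊔ fromEdgeSet {e}) l := by rw [step]
      _ = G ⊔ fromEdgeSet {e} ⊔ fromEdgeSet {a | a ∈ l} := ih h

theorem projector_eq_self {G : SimpleGraph V} {l : List (Sym2 V)}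
    (h : ∀ e ∈ l, ¬ P (G ⊔ fromEdgeSet {e})) : projector P G l = G := by
  induction l with
  | nil => rfl
  | cons e l ih =>
    rw [List.forall_mem_cons] at h
    have step : projStep P G e = G := if_neg h.1
    calc
      projector P G (e :: l) = projector P (projStep P G e) l := rfl
      _ = projector P G l := by rw [step]
      _ = G := ih h.2

theorem not_prop_sup_fromEdgeSet_of_maximal {K S : SimpleGraph V}
    (hS : Maximal (fun G ↦ P G ∧ G ≤ K) S) {e : Sym2 V} (he : e ∈ K.edgeSet \ S.edgeSet) :
    ¬ P (S ⊔ fromEdgeSet {e}) := by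
  intro hPe
  have edge_le_iff {G : SimpleGraph V} : fromEdgeSet {e} ≤ G ↔ e ∈ G.edgeSet := by
    have he_diag : e ∉ Sym2.diagSet := K.not_isDiag_of_mem_edgeSet he.1
    simp [he_diag]
  have hle : S ⊔ fromEdgeSet {e} ≤ S :=
    hS.2 ⟨hPe, sup_le hS.1.2 (edge_le_iff.mpr he.1)⟩ le_sup_left
  exact he.2 (edge_le_iff.mp (le_sup_right.trans hle))

theorem exists_projector_eq_of_maximal (hP : Antitone P) {Gt K S : SimpleGraph V}
    (hfin : (K.edgeSet \ Gt.edgeSet).Finite) (hGt : Gt ≤ S)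
    (hS : Maximal (fun G ↦ P G ∧ G ≤ K) S) :
    ∃ l : List (Sym2 V), l.Nodup ∧ (∀ e, e ∈ l ↔ e ∈ K.edgeSet \ Gt.edgeSet) ∧
      projector P Gt l = S := by
  have hGtS : Gt.edgeSet ⊆ S.edgeSet := edgeSet_mono hGt
  have hSK : S.edgeSet ⊆ K.edgeSet := edgeSet_mono hS.1.2
  obtain ⟨kept, kept_nodup, mem_kept⟩ :=
    exists_nodup_list_mem_iff (hfin.subset (Set.sdiff_subset_sdiff_left hSK))
  obtain ⟨rejected, rejected_nodup, mem_rejected⟩ :=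
    exists_nodup_list_mem_iff (hfin.subset (Set.sdiff_subset_sdiff_right hGtS))
  refine ⟨kept ++ rejected, ?_, fun e ↦ ?_, ?_⟩
  · refine kept_nodup.append rejected_nodup fun e he he' ↦ ?_
    exact ((mem_rejected e).mp he').2 ((mem_kept e).mp he).1
  · rw [List.mem_append, mem_kept, mem_rejected, ← Set.mem_union, Set.union_comm,
      Set.sdiff_union_sdiff_cancel hSK hGtS]
  · have sup_kept : Gt ⊔ fromEdgeSet {e | e ∈ kept} = S := by
      have kept_eq : {e | e ∈ kept} = S.edgeSet \ Gt.edgeSet := Set.ext mem_kept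
      rw [kept_eq, ← edgeSet_sdiff, fromEdgeSet_edgeSet, sup_sdiff_cancel_right hGt]
    have projector_kept : projector P Gt kept = S := by
      rw [projector_eq_sup hP (sup_kept ▸ hS.1.1), sup_kept]
    rw [projector_append, projector_kept]
    exact projector_eq_self fun e he ↦
      not_prop_sup_fromEdgeSet_of_maximal hS ((mem_rejected e).mp he)

theorem minimizer_mem_projector_outputs_general (hP : Antitone P) {Gt Ghat Gstar : SimpleGraph V}
    (hcand : (Ghat.edgeSet \ Gt.edgeSet).Finite)
    (hdist : (symmDiff Ghat.edgeSet Gstar.edgeSet).Finite)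
    (hstar : P Gstar) (hGt : Gt ≤ Gstar)
    (hmin : ∀ H, P H → Gt ≤ H → editDist Ghat Gstar ≤ editDist Ghat H) :
    ∃ l : List (Sym2 V), l.Nodup ∧ (∀ e, e ∈ l ↔ e ∈ Ghat.edgeSet \ Gt.edgeSet) ∧
      projector P Gt l = Gstar := by
  have cand_eq : (Gt ⊔ Ghat).edgeSet \ Gt.edgeSet = Ghat.edgeSet \ Gt.edgeSet := by
    rw [edgeSet_sup, Set.union_sdiff_left]
  rw [← cand_eq] at hcand ⊢
  exact exists_projector_eq_of_maximal hP hcand hGt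
    (maximal_of_forall_editDist_le hP hstar hGt hdist hmin)

end

/-- Labeled-graph version of Theorem 1: every minimizer `Gstar` of the edit
distance to `Ghat` over the constraint set `C = {G : P G ∧ Gt ≤ G}` is an
output of the projector for some enumeration (without repetition) of the
candidate edge set `Ghat.edgeSet \ Gt.edgeSet`. -/
theorem minimizer_mem_projector_outputs {V : Type*} [Fintype V] [DecidableEq V]
    (P : SimpleGraph V → Prop)
    (hP : ∀ G G' : SimpleGraph V, P G → G' ≤ G → P G')
    (Gt Ghat : SimpleGraph V) (hle : Gt ≤ Ghat) (hGt : P Gt) :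
    ∀ Gstar : SimpleGraph V, P Gstar → Gt ≤ Gstar →
      (∀ H : SimpleGraph V, P H → Gt ≤ H → editDist Ghat Gstar ≤ editDist Ghat H) →
      ∃ l : List (Sym2 V), l.Nodup ∧
        (∀ e : Sym2 V, e ∈ l ↔ e ∈ Ghat.edgeSet \ Gt.edgeSet) ∧
        projector P Gt l = Gstar := fun _ hstar hGtstar hmin ↦
  minimizer_mem_projector_outputs_general (fun _ _ hsub hG ↦ hP _ _ hG hsub)
    (Set.toFinite _) (Set.toFinite _) hstar hGtstar hmin
end

section
/- Let Gt ≤ Ĝ be simple graphs on a finite vertex type V with Gt acyclic, and let E_cand = (edges of Ĝ) \ (edges of Gt). Then any two maximal feasible subsets S₁, S₂ ⊆ E_cand (feasible meaning Gt ∪ S is acyclic) have equal cardinality; equivalently, every maximal feasible subset attains the maximum cardinality among feasible subsets. (Core of Theorem 2: for the acyclicity constraint, every output of the projector is an optimal projection.) -/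
open SimpleGraph

/-!
If `S` is a maximal feasible set, then `Gt ∪ S` is a spanning forest of `Gt ∪ Ghat`. Spanning
forests have the base exchange property of matroids: removing an edge `uv` from a spanning forest
`F₁` disconnects `u` from `v`, while another spanning forest `F₂` joins them, so some edge of `F₂`
joins distinct components of `F₁ - uv`; it lies within a component of `F₁`, so it reconnects `u` to
`v`. The exchange property forces `|F₁ \ F₂| = |F₂ \ F₁|`, even for infinite forests, and the edges
of `Gt` cancel from these differences.
-/

section Reachability

variable {V : Type*} {F G : SimpleGraph V} {u v x y : V}

theorem reachable_le_of_adj_le_reachable (h : G.Adj ≤ F.Reachable) :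
    G.Reachable ≤ F.Reachable := by
  rintro a b ⟨p⟩
  induction p with
  | nil => exact .rfl
  | cons hadj _ ih => exact (h _ _ hadj).trans ih

theorem exists_adj_not_reachable (hG : G.Reachable u v) (hF : ¬F.Reachable u v) :
    ∃ x y, G.Adj x y ∧ ¬F.Reachable x y := by
  by_contra! h
  exact hF (reachable_le_of_adj_le_reachable h u v hG)

theorem reachable_sup_edge_le (hle : G ≤ F) (huv : F.Reachable u v) :
    (G ⊔ edge u v).Reachable ≤ F.Reachable := by
  refine reachable_le_of_adj_le_reachable ?_
  rintro a b (hab | hab)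
  · exact (hle hab).reachable
  · rcases (edge_adj u v a b).1 hab with ⟨⟨rfl, rfl⟩ | ⟨rfl, rfl⟩, -⟩
    exacts [huv, huv.symm]

theorem le_deleteEdges_sup_edge : F ≤ F.deleteEdges {s(u, v)} ⊔ edge u v := by
  intro a b hab
  by_cases he : s(a, b) = s(u, v)
  · exact .inr ((adj_edge u v).2 ⟨he.symm, hab.ne⟩)
  · exact .inl (deleteEdges_adj.2 ⟨hab, he⟩)

theorem reachable_sup_edge_exchange (hxy : (G ⊔ edge u v).Reachable x y)
    (h : ¬G.Reachable x y) : (G ⊔ edge x y).Reachable u v := by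
  by_contra huv
  have hxy_ne : x ≠ y := fun heq ↦ h (heq ▸ .rfl)
  have hbridge : (G ⊔ edge x y ⊔ edge u v).IsBridge s(x, y) :=
    .sup_edge_of_not_reachable_of_isBridge huv (isBridge_sup_edge.2 (.of_not_reachable h))
      (.inr ((adj_edge x y).2 ⟨rfl, hxy_ne⟩))
  refine isBridge_iff.1 hbridge (hxy.mono fun a b hab ↦ deleteEdges_adj.2 ⟨?_, fun he ↦ ?_⟩)
  · exact hab.imp_left .inl
  · rcases (adj_congr_of_sym2 (G ⊔ edge u v) he).1 hab with hadj | hadj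
    · exact h hadj.reachable
    · obtain ⟨he, -⟩ := (adj_edge u v).1 hadj
      have hne : u ≠ v := fun heq ↦ huv (heq ▸ .rfl)
      exact huv (Adj.reachable (.inr ((adj_edge x y).2 ⟨he.symm, hne⟩)))

end Reachability

/-- `F` is a spanning forest of `H`: an acyclic subgraph joining all vertices that `H` joins. It is
enough to ask for the latter on edges of `H`. -/
structure IsSpanningForest {V : Type*} (F H : SimpleGraph V) : Prop where
  le : F ≤ H
  isAcyclic : F.IsAcyclic
  adj_le_reachable : H.Adj ≤ F.Reachable

namespace IsSpanningForest

variable {V : Type*} {F F₁ F₂ H : SimpleGraph V} {u v x y : V}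

theorem deleteEdges_sup_edge (hF : IsSpanningForest F H) (hxy : H.Adj x y)
    (h : ¬(F.deleteEdges {s(u, v)}).Reachable x y) :
    IsSpanningForest (F.deleteEdges {s(u, v)} ⊔ edge x y) H where
  le := sup_le ((deleteEdges_le _).trans hF.le) ((edge_le_iff H).2 (.inr hxy))
  isAcyclic := (hF.isAcyclic.anti (deleteEdges_le _)).sup_edge_of_not_reachable h
  adj_le_reachable := by
    have huv : (F.deleteEdges {s(u, v)} ⊔ edge x y).Reachable u v :=
      reachable_sup_edge_exchange ((hF.adj_le_reachable _ _ hxy).mono le_deleteEdges_sup_edge) h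
    exact fun a b hab ↦ reachable_sup_edge_le le_sup_left huv a b
      ((hF.adj_le_reachable a b hab).mono le_deleteEdges_sup_edge)

theorem exists_edge_exchange (h₁ : IsSpanningForest F₁ H) (h₂ : IsSpanningForest F₂ H)
    (huv₁ : F₁.Adj u v) (huv₂ : ¬F₂.Adj u v) :
    ∃ x y, F₂.Adj x y ∧ ¬F₁.Adj x y ∧
      IsSpanningForest (F₁.deleteEdges {s(u, v)} ⊔ edge x y) H := by
  have hbridge : ¬(F₁.deleteEdges {s(u, v)}).Reachable u v :=
    isBridge_iff.1 (isAcyclic_iff_forall_adj_isBridge.1 h₁.isAcyclic huv₁)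
  obtain ⟨x, y, hxy, hcross⟩ :=
    exists_adj_not_reachable (h₂.adj_le_reachable u v (h₁.le huv₁)) hbridge
  refine ⟨x, y, hxy, fun hxy₁ ↦ ?_, h₁.deleteEdges_sup_edge (h₂.le hxy) hcross⟩
  have hne : s(x, y) ≠ s(u, v) := fun he ↦ huv₂ ((adj_congr_of_sym2 F₂ he).1 hxy)
  exact hcross (deleteEdges_adj.2 ⟨hxy₁, hne⟩).reachable

theorem exchangeProperty (H : SimpleGraph V) :
    Matroid.ExchangeProperty fun B ↦ ∃ F, IsSpanningForest F H ∧ F.edgeSet = B := by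
  rintro _ _ ⟨F₁, h₁, rfl⟩ ⟨F₂, h₂, rfl⟩ ⟨u, v⟩ ⟨huv₁, huv₂⟩
  obtain ⟨x, y, hxy₂, hxy₁, hF⟩ := h₁.exists_edge_exchange h₂ huv₁ huv₂
  refine ⟨s(x, y), ⟨hxy₂, hxy₁⟩, _, hF, ?_⟩
  rw [edgeSet_sup, edgeSet_deleteEdges, edgeSet_edge_of_ne hxy₂.ne, Set.union_singleton]

theorem encard_edgeSet_sdiff_eq (h₁ : IsSpanningForest F₁ H) (h₂ : IsSpanningForest F₂ H) :
    (F₁.edgeSet \ F₂.edgeSet).encard = (F₂.edgeSet \ F₁.edgeSet).encard :=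
  (exchangeProperty H).encard_sdiff_eq ⟨F₁, h₁, rfl⟩ ⟨F₂, h₂, rfl⟩

end IsSpanningForest

theorem edgeSet_sup_fromEdgeSet {V : Type*} {G H : SimpleGraph V} {S : Set (Sym2 V)}
    (hS : S ⊆ H.edgeSet) : (G ⊔ fromEdgeSet S).edgeSet = G.edgeSet ∪ S := by
  have hdiag : Disjoint S Sym2.diagSet :=
    Set.disjoint_left.2 fun _ he ↦ H.not_isDiag_of_mem_edgeSet (hS he)
  rw [edgeSet_sup, edgeSet_fromEdgeSet, hdiag.sdiff_eq_left]

theorem edgeSet_sup_fromEdgeSet_sdiff {V : Type*} {G H : SimpleGraph V} {S₁ S₂ : Set (Sym2 V)}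
    (hS₁ : S₁ ⊆ H.edgeSet \ G.edgeSet) (hS₂ : S₂ ⊆ H.edgeSet) :
    (G ⊔ fromEdgeSet S₁).edgeSet \ (G ⊔ fromEdgeSet S₂).edgeSet = S₁ \ S₂ := by
  have hdisj : Disjoint S₁ G.edgeSet := (Set.subset_sdiff.1 hS₁).2
  rw [edgeSet_sup_fromEdgeSet (hS₁.trans Set.sdiff_subset), edgeSet_sup_fromEdgeSet hS₂,
    ← Set.sdiff_sdiff, Set.union_sdiff_left, hdisj.sdiff_eq_left]

/-- `S` is a maximal feasible set of candidate edges: `G ∪ S` is acyclic, but adding any further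
edge of `H` outside `G` closes a cycle. As feasibility passes to subsets, testing one additional
edge at a time amounts to maximality under inclusion. -/
structure IsMaximalFeasible {V : Type*} (G H : SimpleGraph V) (S : Set (Sym2 V)) : Prop where
  subset : S ⊆ H.edgeSet \ G.edgeSet
  isAcyclic : (G ⊔ fromEdgeSet S).IsAcyclic
  not_isAcyclic_insert : ∀ e ∈ (H.edgeSet \ G.edgeSet) \ S,
    ¬(G ⊔ fromEdgeSet (insert e S)).IsAcyclic

namespace IsMaximalFeasible

variable {V : Type*} {G H : SimpleGraph V} {S : Set (Sym2 V)}

theorem reachable_of_adj (h : IsMaximalFeasible G H S) {a b : V} (hab : H.Adj a b) :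
    (G ⊔ fromEdgeSet S).Reachable a b := by
  by_contra hnot
  have hG : s(a, b) ∉ G.edgeSet := fun hmem ↦ hnot (Adj.reachable (.inl hmem))
  have hS : s(a, b) ∉ S := fun hmem ↦
    hnot (Adj.reachable (.inr ((fromEdgeSet_adj S).2 ⟨hmem, hab.ne⟩)))
  have hacyclic := h.isAcyclic.sup_edge_of_not_reachable hnot
  rw [sup_assoc, edge, ← fromEdgeSet_union, Set.union_singleton] at hacyclic
  exact h.not_isAcyclic_insert s(a, b) ⟨⟨hab, hG⟩, hS⟩ hacyclic

theorem isSpanningForest (h : IsMaximalFeasible G H S) :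
    IsSpanningForest (G ⊔ fromEdgeSet S) (G ⊔ H) where
  le := sup_le_sup_left (H.fromEdgeSet_le.2 fun _ he ↦ (h.subset he.1).1) G
  isAcyclic := h.isAcyclic
  adj_le_reachable _ _ hab := hab.elim (fun hG ↦ Adj.reachable (.inl hG)) h.reachable_of_adj

end IsMaximalFeasible

theorem acyclic_maximal_feasible_same_card_general {V : Type*} {Gt Ghat : SimpleGraph V}
    {S₁ S₂ : Set (Sym2 V)} (h₁ : IsMaximalFeasible Gt Ghat S₁)
    (h₂ : IsMaximalFeasible Gt Ghat S₂) : S₁.encard = S₂.encard := by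
  have hsdiff : (S₁ \ S₂).encard = (S₂ \ S₁).encard := by
    rw [← edgeSet_sup_fromEdgeSet_sdiff h₁.subset (h₂.subset.trans Set.sdiff_subset),
      ← edgeSet_sup_fromEdgeSet_sdiff h₂.subset (h₁.subset.trans Set.sdiff_subset)]
    exact h₁.isSpanningForest.encard_edgeSet_sdiff_eq h₂.isSpanningForest
  calc S₁.encard = (S₁ \ S₂).encard + (S₁ ∩ S₂).encard :=
        (Set.encard_sdiff_add_encard_inter S₁ S₂).symm
    _ = (S₂ \ S₁).encard + (S₂ ∩ S₁).encard := by rw [hsdiff, Set.inter_comm]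
    _ = S₂.encard := Set.encard_sdiff_add_encard_inter S₂ S₁

/-- Core of Theorem 2: for the acyclicity constraint, any two maximal feasible
subsets of the candidate edge set `Ghat.edgeSet \ Gt.edgeSet` (subsets `S` with
`Gt ∪ S` acyclic to which no further candidate edge can be added keeping
acyclicity) have equal cardinality. -/
theorem acyclic_maximal_feasible_same_card {V : Type*} [Fintype V] [DecidableEq V]
    (Gt Ghat : SimpleGraph V) (hle : Gt ≤ Ghat) (hac : Gt.IsAcyclic) :
    ∀ S₁ S₂ : Set (Sym2 V),
      S₁ ⊆ Ghat.edgeSet \ Gt.edgeSet →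
      (Gt ⊔ SimpleGraph.fromEdgeSet S₁).IsAcyclic →
      (∀ e ∈ (Ghat.edgeSet \ Gt.edgeSet) \ S₁,
        ¬ (Gt ⊔ SimpleGraph.fromEdgeSet (insert e S₁)).IsAcyclic) →
      S₂ ⊆ Ghat.edgeSet \ Gt.edgeSet →
      (Gt ⊔ SimpleGraph.fromEdgeSet S₂).IsAcyclic →
      (∀ e ∈ (Ghat.edgeSet \ Gt.edgeSet) \ S₂,
        ¬ (Gt ⊔ SimpleGraph.fromEdgeSet (insert e S₂)).IsAcyclic) →
      S₁.ncard = S₂.ncard := by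
  intro S₁ S₂ hS₁ hac₁ hmax₁ hS₂ hac₂ hmax₂
  exact congrArg ENat.toNat
    (acyclic_maximal_feasible_same_card_general ⟨hS₁, hac₁, hmax₁⟩ ⟨hS₂, hac₂, hmax₂⟩)
end

section
/- Let Gt ≤ Ĝ be simple graphs on a finite vertex type V with Gt acyclic, and let C = {G : G is acyclic and Gt ≤ G}. Then a graph G* ∈ C minimizes the edge edit distance d(Ĝ, ·) over C if and only if Gt ≤ G* ≤ Ĝ and for every edge e of Ĝ that is not an edge of G*, the two endpoints of e lie in the same connected component of G* (equivalently, inserting e into G* creates a cycle). (Theorem 2: for the acyclicity constraint, the set of graphs output by the projector equals the set of optimal projections.) -/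
open SimpleGraph

/-!
Deleting a superfluous edge, or inserting an edge of `Ghat` between two components, keeps `Gstar`
feasible and strictly decreases its distance to `Ghat`; so a minimizer must be a spanning forest of
`Ghat`. Conversely, the edges missing from a spanning forest `Gstar` are as few as possible: for a
competitor `H`, the matroid exchange property of forests trades the edges of `H ⊓ Ghat` outside
`Gstar` one for one for edges of `Gstar` outside `H`.
-/

section EdgeExchange

variable {V : Type*} {F T : SimpleGraph V}

theorem reachable_le_reachable_of_adj_le (h : T.Adj ≤ F.Reachable) : T.Reachable ≤ F.Reachable := by
  rw [T.reachable_eq_reflTransGen]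
  exact Relation.reflTransGen_le_of_equivalence_of_le F.reachable_is_equivalence h

theorem exists_isAcyclic_edgeSet_eq_insert_sdiff_singleton (hF : F.IsAcyclic) {u v : V}
    (huvF : F.Adj u v) (huvT : ¬ T.Adj u v) (hreach : T.Reachable u v) :
    ∃ f ∈ T.edgeSet \ F.edgeSet, ∃ F' : SimpleGraph V,
      F'.IsAcyclic ∧ F'.edgeSet = insert f (F.edgeSet \ {s(u, v)}) := by
  have hbridge : ¬ (F.deleteEdges {s(u, v)}).Reachable u v :=
    isBridge_iff.1 (isAcyclic_iff_forall_adj_isBridge.1 hF huvF)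
  -- Some edge of `T` crosses the cut of `F` opened by the deletion of the bridge `s(u, v)`.
  obtain ⟨x, y, hxyT, hxy⟩ : ∃ x y, T.Adj x y ∧ ¬ (F.deleteEdges {s(u, v)}).Reachable x y := by
    contrapose! hbridge
    exact reachable_le_reachable_of_adj_le hbridge u v hreach
  have hxyF : ¬ F.Adj x y := fun hadj ↦ by
    have hne : s(x, y) ≠ s(u, v) := fun heq ↦ huvT <| by rwa [← mem_edgeSet, ← heq]
    exact hxy (deleteEdges_adj.2 ⟨hadj, hne⟩).reachable
  refine ⟨s(x, y), ⟨hxyT, hxyF⟩, F.deleteEdges {s(u, v)} ⊔ edge x y,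
    (hF.anti (deleteEdges_le _)).sup_edge_of_not_reachable hxy, ?_⟩
  rw [edgeSet_sup, edgeSet_edge_of_ne hxyT.ne, edgeSet_deleteEdges, Set.union_singleton]

theorem encard_edgeSet_sdiff_le (hF : F.IsAcyclic) (hreach : F.Adj ≤ T.Reachable) :
    (F.edgeSet \ T.edgeSet).encard ≤ (T.edgeSet \ F.edgeSet).encard := by
  obtain htop | ⟨n, hn⟩ :=
    (eq_or_ne (T.edgeSet \ F.edgeSet).encard ⊤).imp_right ENat.ne_top_iff_exists.1
  · exact htop ▸ le_top
  induction n generalizing F with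
  | zero =>
    have hTF : T.edgeSet \ F.edgeSet = ∅ := Set.encard_eq_zero.1 hn.symm
    suffices F.edgeSet \ T.edgeSet = ∅ by rw [this, hTF]
    refine Set.eq_empty_of_forall_notMem ?_
    rintro ⟨u, v⟩ ⟨huvF, huvT⟩
    obtain ⟨f, hf, -⟩ :=
      exists_isAcyclic_edgeSet_eq_insert_sdiff_singleton hF huvF huvT (hreach u v huvF)
    exact hTF.subset hf
  | succ n ih =>
    obtain hFT | ⟨⟨u, v⟩, huv⟩ := (F.edgeSet \ T.edgeSet).eq_empty_or_nonempty
    · simp only [hFT, Set.encard_empty, zero_le]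
    obtain ⟨f, hf, F', hF', hedges⟩ :=
      exists_isAcyclic_edgeSet_eq_insert_sdiff_singleton hF huv.1 huv.2 (hreach u v huv.1)
    have hF'T : F'.edgeSet \ T.edgeSet = (F.edgeSet \ T.edgeSet) \ {s(u, v)} := by
      rw [hedges, Set.insert_sdiff_of_mem _ hf.1, Set.sdiff_sdiff_comm]
    have hTF' : T.edgeSet \ F'.edgeSet = (T.edgeSet \ F.edgeSet) \ {f} := by
      ext e
      have : e ∈ T.edgeSet → e ≠ s(u, v) := by rintro he rfl; exact huv.2 he
      simp only [hedges, Set.mem_sdiff, Set.mem_insert_iff, Set.mem_singleton_iff]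
      tauto
    have hreach' : F'.Adj ≤ T.Reachable := fun x y hxy ↦ by
      obtain heq | hmem := hedges.subset ((mem_edgeSet F').2 hxy)
      · exact Adj.reachable <| by rw [← mem_edgeSet, heq]; exact hf.1
      · exact hreach x y hmem.1
    rw [← Set.encard_sdiff_singleton_add_one huv, ← Set.encard_sdiff_singleton_add_one hf,
      ← hF'T, ← hTF']
    refine add_le_add_left (ih hF' hreach' ?_) 1
    rw [← Set.encard_sdiff_singleton_add_one hf, ← hTF', Nat.cast_add_one] at hn
    exact ENat.add_left_injective_of_ne_top ENat.one_ne_top hn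

end EdgeExchange

section EditDistance

variable {V : Type*} {G₀ G : SimpleGraph V}

/-- The edge edit distance with values in `ℕ∞`, for graphs on an arbitrary vertex type: unlike
`editDist`, it is `⊤` when the edge sets differ in infinitely many edges. -/
noncomputable def editEDist (G₁ G₂ : SimpleGraph V) : ℕ∞ :=
  (symmDiff G₁.edgeSet G₂.edgeSet).encard

theorem coe_editDist [Finite V] (G₁ G₂ : SimpleGraph V) :
    (editDist G₁ G₂ : ℕ∞) = editEDist G₁ G₂ :=
  Set.coe_ncard_eq_encard _

theorem editEDist_lt_of_symmDiff_eq_sdiff_singleton {G' : SimpleGraph V}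
    (hfin : editEDist G₀ G ≠ ⊤) {e : Sym2 V} (he : e ∈ symmDiff G₀.edgeSet G.edgeSet)
    (h : symmDiff G₀.edgeSet G'.edgeSet = symmDiff G₀.edgeSet G.edgeSet \ {e}) :
    editEDist G₀ G' < editEDist G₀ G := by
  rw [editEDist, h]
  exact (Set.encard_ne_top_iff.1 hfin).sdiff.encard_lt_encard (Set.sdiff_singleton_ssubset.2 he)

theorem editEDist_deleteEdges_lt (hfin : editEDist G₀ G ≠ ⊤) {e : Sym2 V}
    (heG : e ∈ G.edgeSet) (heG₀ : e ∉ G₀.edgeSet) :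
    editEDist G₀ (G.deleteEdges {e}) < editEDist G₀ G := by
  refine editEDist_lt_of_symmDiff_eq_sdiff_singleton hfin (Or.inr ⟨heG, heG₀⟩) ?_
  rw [edgeSet_deleteEdges]
  grind

theorem editEDist_sup_edge_lt (hfin : editEDist G₀ G ≠ ⊤) {u v : V}
    (huvG₀ : G₀.Adj u v) (huvG : ¬ G.Adj u v) :
    editEDist G₀ (G ⊔ edge u v) < editEDist G₀ G := by
  refine editEDist_lt_of_symmDiff_eq_sdiff_singleton hfin (e := s(u, v)) (Or.inl ⟨huvG₀, huvG⟩) ?_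
  rw [edgeSet_sup, edgeSet_edge_of_ne huvG₀.ne]
  grind [mem_edgeSet]

theorem editEDist_le_of_adj_le_reachable {H : SimpleGraph V} (hle : G ≤ G₀)
    (hreach : G₀.Adj ≤ G.Reachable) (hH : H.IsAcyclic) : editEDist G₀ G ≤ editEDist G₀ H := by
  have hexchange : ((H ⊓ G₀).edgeSet \ G.edgeSet).encard ≤
      (G.edgeSet \ (H ⊓ G₀).edgeSet).encard :=
    encard_edgeSet_sdiff_le (hH.anti inf_le_left) fun u v huv ↦ hreach u v huv.2
  have hG : G.edgeSet ⊆ G₀.edgeSet := edgeSet_mono hle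
  rw [edgeSet_inf] at hexchange
  calc (symmDiff G₀.edgeSet G.edgeSet).encard
      = ((H.edgeSet ∩ G₀.edgeSet) \ G.edgeSet ∪
          G₀.edgeSet \ (G.edgeSet ∪ H.edgeSet)).encard := by congr 1; grind
    _ ≤ ((H.edgeSet ∩ G₀.edgeSet) \ G.edgeSet).encard +
          (G₀.edgeSet \ (G.edgeSet ∪ H.edgeSet)).encard := Set.encard_union_le _ _
    _ ≤ (G.edgeSet \ (H.edgeSet ∩ G₀.edgeSet)).encard +
          (G₀.edgeSet \ (G.edgeSet ∪ H.edgeSet)).encard := by gcongr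
    _ = (G.edgeSet \ (H.edgeSet ∩ G₀.edgeSet) ∪
          G₀.edgeSet \ (G.edgeSet ∪ H.edgeSet)).encard :=
        (Set.encard_union_eq (by rw [Set.disjoint_left]; grind)).symm
    _ ≤ (symmDiff G₀.edgeSet H.edgeSet).encard := Set.encard_le_encard (by grind)

end EditDistance

theorem acyclic_minimizer_iff_general {V : Type*} {Gt Ghat Gstar : SimpleGraph V}
    (hle : Gt ≤ Ghat) (hGstar : Gstar.IsAcyclic) (hGtGstar : Gt ≤ Gstar)
    (hfin : editEDist Ghat Gstar ≠ ⊤) :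
    (∀ H : SimpleGraph V, H.IsAcyclic → Gt ≤ H → editEDist Ghat Gstar ≤ editEDist Ghat H) ↔
      Gstar ≤ Ghat ∧ ∀ u v : V, Ghat.Adj u v → ¬ Gstar.Adj u v → Gstar.Reachable u v := by
  refine ⟨fun hmin ↦ ⟨fun u v huv ↦ ?_, fun u v huvhat huvstar ↦ ?_⟩, ?_⟩
  · by_contra huvhat
    have hGt : Gt ≤ Gstar.deleteEdges {s(u, v)} := by
      rw [← edgeSet_subset_edgeSet, edgeSet_deleteEdges]
      exact Set.subset_sdiff_singleton (edgeSet_mono hGtGstar) fun h ↦ huvhat (hle h)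
    exact (hmin _ (hGstar.anti (deleteEdges_le _)) hGt).not_gt
      (editEDist_deleteEdges_lt hfin huv huvhat)
  · by_contra hreach
    exact (hmin _ (hGstar.sup_edge_of_not_reachable hreach) (hGtGstar.trans le_sup_left)).not_gt
      (editEDist_sup_edge_lt hfin huvhat huvstar)
  · rintro ⟨hsub, hreach⟩ H hH -
    refine editEDist_le_of_adj_le_reachable hsub (fun u v huvhat ↦ ?_) hH
    exact (em (Gstar.Adj u v)).elim Adj.reachable (hreach u v huvhat)

/-- Theorem 2 (acyclicity constraint): a graph `Gstar` in the constraint set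
`C = {G : G acyclic ∧ Gt ≤ G}` minimizes the edit distance to `Ghat` over `C`
iff `Gt ≤ Gstar ≤ Ghat` and every edge of `Ghat` missing from `Gstar` joins two
vertices in the same connected component of `Gstar`. -/
theorem acyclic_minimizer_iff {V : Type*} [Fintype V] [DecidableEq V]
    (Gt Ghat : SimpleGraph V) (hle : Gt ≤ Ghat) (hac : Gt.IsAcyclic)
    (Gstar : SimpleGraph V) (hGstar : Gstar.IsAcyclic) (hGtGstar : Gt ≤ Gstar) :
    (∀ H : SimpleGraph V, H.IsAcyclic → Gt ≤ H →
        editDist Ghat Gstar ≤ editDist Ghat H) ↔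
      (Gt ≤ Gstar ∧ Gstar ≤ Ghat ∧
        ∀ u v : V, s(u, v) ∈ Ghat.edgeSet → s(u, v) ∉ Gstar.edgeSet →
          Gstar.Reachable u v) := by
  simpa [← coe_editDist, hGtGstar] using acyclic_minimizer_iff_general hle hGstar hGtGstar
    (by simp [← coe_editDist])
end

section
/- Let P be an edge-deletion invariant predicate on simple graphs on a finite vertex type V, and let Gt ≤ Ĝ be simple graphs on V with P(Gt). Then for every graph G on V with P(G) and Gt ≤ G, the meet G ⊓ Ĝ (the graph whose edges are the common edges of G and Ĝ) satisfies P(G ⊓ Ĝ), Gt ≤ G ⊓ Ĝ ≤ Ĝ, and d(Ĝ, G ⊓ Ĝ) ≤ d(Ĝ, G); moreover the inequality is strict whenever G is not a subgraph of Ĝ. (Intersection lemma underlying Theorem 1: intersecting any constraint-satisfying supergraph of Gt with Ĝ stays in the constraint set and does not increase the distance to Ĝ.) -/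
open SimpleGraph

/-! The meet lies on a geodesic: `d(Ĝ, G) = d(Ĝ, G ⊓ Ĝ) + d(G ⊓ Ĝ, G)`, because the two summands
count the disjoint halves `Ĝ \ G` and `G \ Ĝ` of the symmetric difference of the edge sets. The
second summand vanishes exactly when `G ≤ Ĝ`. -/

section EditDist

variable {V : Type*} {G H : SimpleGraph V}

theorem editDist_pos_iff_ne (hfin : (symmDiff G.edgeSet H.edgeSet).Finite) :
    0 < editDist G H ↔ G ≠ H := by
  rw [editDist, Set.ncard_pos hfin, Set.symmDiff_nonempty, Ne, edgeSet_inj]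

theorem edgeSet_inf_symmDiff_left (G H : SimpleGraph V) :
    symmDiff (G ⊓ H).edgeSet G.edgeSet = G.edgeSet \ H.edgeSet := by
  rw [edgeSet_inf, symmDiff_of_le Set.inter_subset_left, Set.sdiff_self_inter]

theorem edgeSet_symmDiff_inf_right (G H : SimpleGraph V) :
    symmDiff H.edgeSet (G ⊓ H).edgeSet = H.edgeSet \ G.edgeSet := by
  rw [symmDiff_comm, inf_comm, edgeSet_inf_symmDiff_left]

theorem editDist_inf_add_editDist_inf (hfin : (symmDiff H.edgeSet G.edgeSet).Finite) :
    editDist H (G ⊓ H) + editDist (G ⊓ H) G = editDist H G := by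
  rw [Set.symmDiff_def, Set.finite_union] at hfin
  rw [editDist, editDist, editDist, edgeSet_symmDiff_inf_right, edgeSet_inf_symmDiff_left,
    Set.symmDiff_def, Set.ncard_union_eq disjoint_sdiff_sdiff hfin.1 hfin.2]

theorem editDist_inf_le (hfin : (symmDiff H.edgeSet G.edgeSet).Finite) :
    editDist H (G ⊓ H) ≤ editDist H G :=
  le_of_add_le_left (editDist_inf_add_editDist_inf hfin).le

theorem editDist_inf_lt (hfin : (symmDiff H.edgeSet G.edgeSet).Finite) (hGH : ¬ G ≤ H) :
    editDist H (G ⊓ H) < editDist H G := by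
  have hfin_inf : (symmDiff (G ⊓ H).edgeSet G.edgeSet).Finite := by
    rw [edgeSet_inf_symmDiff_left]
    exact hfin.subset Set.subset_union_right
  have hpos : 0 < editDist (G ⊓ H) G :=
    (editDist_pos_iff_ne hfin_inf).mpr (mt inf_eq_left.mp hGH)
  rw [← editDist_inf_add_editDist_inf hfin]
  exact Nat.lt_add_of_pos_right hpos

end EditDist

theorem meet_stays_in_constraint_set_general {V : Type*}
    (P : SimpleGraph V → Prop)
    (hP : ∀ G G' : SimpleGraph V, P G → G' ≤ G → P G')
    (Gt Ghat : SimpleGraph V) (hle : Gt ≤ Ghat) :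
    ∀ G : SimpleGraph V, P G → Gt ≤ G → (symmDiff Ghat.edgeSet G.edgeSet).Finite →
      P (G ⊓ Ghat) ∧ Gt ≤ G ⊓ Ghat ∧ G ⊓ Ghat ≤ Ghat ∧
      editDist Ghat (G ⊓ Ghat) ≤ editDist Ghat G ∧
      (¬ G ≤ Ghat → editDist Ghat (G ⊓ Ghat) < editDist Ghat G) :=
  fun G hG hGtG hfin =>
    ⟨hP G (G ⊓ Ghat) hG inf_le_left, le_inf hGtG hle, inf_le_right,
      editDist_inf_le hfin, editDist_inf_lt hfin⟩

/-- Intersection lemma underlying Theorem 1: for an edge-deletion invariant `P`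
with `P Gt` and `Gt ≤ Ghat`, intersecting any constraint-satisfying supergraph
`G` of `Gt` with `Ghat` stays in the constraint set, is a subgraph of `Ghat`,
and does not increase the edit distance to `Ghat`; the distance strictly
decreases whenever `G` is not a subgraph of `Ghat`. -/
theorem meet_stays_in_constraint_set {V : Type*} [Fintype V] [DecidableEq V]
    (P : SimpleGraph V → Prop)
    (hP : ∀ G G' : SimpleGraph V, P G → G' ≤ G → P G')
    (Gt Ghat : SimpleGraph V) (hle : Gt ≤ Ghat) (hGt : P Gt) :
    ∀ G : SimpleGraph V, P G → Gt ≤ G →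
      P (G ⊓ Ghat) ∧ Gt ≤ G ⊓ Ghat ∧ G ⊓ Ghat ≤ Ghat ∧
      editDist Ghat (G ⊓ Ghat) ≤ editDist Ghat G ∧
      (¬ G ≤ Ghat → editDist Ghat (G ⊓ Ghat) < editDist Ghat G) :=
  fun G hG hGtG =>
    meet_stays_in_constraint_set_general P hP Gt Ghat hle G hG hGtG (Set.toFinite _)
end

section
/- Let P be an edge-deletion invariant predicate on simple graphs on a finite vertex type V, and let Gt be a simple graph on V with P(Gt). Then the minimum edge edit distance to the constraint set C = {G : P(G) and Gt ≤ G} is monotone under edge insertion: for all simple graphs Ĝ, Ĥ on V with Gt ≤ Ĝ ≤ Ĥ, the minimum over G ∈ C of d(Ĥ, G) is at least the minimum over G ∈ C of d(Ĝ, G). (Key inequality in the proof of Theorem 1: inserting further edges can only take the current graph farther from the constraint set.) -/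
open SimpleGraph

theorem editDist_inf_right {V : Type*} (G₁ G₂ : SimpleGraph V) :
    editDist G₁ (G₁ ⊓ G₂) = (G₁.edgeSet \ G₂.edgeSet).ncard := by
  rw [editDist, edgeSet_inf, symmDiff_of_ge Set.inter_subset_left, Set.sdiff_self_inter]

theorem editDist_inf_le_editDist {V : Type*} {G₁ G₂ G : SimpleGraph V} (hle : G₁ ≤ G₂)
    (hfin : (symmDiff G₂.edgeSet G.edgeSet).Finite) :
    editDist G₁ (G₁ ⊓ G) ≤ editDist G₂ G := by
  have hsub : G₁.edgeSet \ G.edgeSet ⊆ symmDiff G₂.edgeSet G.edgeSet :=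
    (Set.sdiff_subset_sdiff_left (edgeSet_mono hle)).trans Set.subset_union_left
  rw [editDist_inf_right]
  exact Set.ncard_le_ncard hsub hfin

/-- Key inequality in the proof of Theorem 1: for an edge-deletion invariant
`P` with `P Gt`, the minimum edit distance from a graph to the constraint set
`C = {G : P G ∧ Gt ≤ G}` is monotone under edge insertion: if
`Gt ≤ Ghat ≤ Hhat`, then the minimum distance from `Ghat` to `C` is at most
the minimum distance from `Hhat` to `C`. -/
theorem min_dist_to_constraint_monotone {V : Type*} [Fintype V] [DecidableEq V]
    (P : SimpleGraph V → Prop)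
    (hP : ∀ G G' : SimpleGraph V, P G → G' ≤ G → P G')
    (Gt : SimpleGraph V) (hGt : P Gt) :
    ∀ Ghat Hhat : SimpleGraph V, Gt ≤ Ghat → Ghat ≤ Hhat →
      sInf {n : ℕ | ∃ G : SimpleGraph V, P G ∧ Gt ≤ G ∧ editDist Ghat G = n} ≤
        sInf {n : ℕ | ∃ G : SimpleGraph V, P G ∧ Gt ≤ G ∧ editDist Hhat G = n} := by
  intro Ghat Hhat hGhat hHhat
  refine le_csInf ⟨_, Gt, hGt, le_rfl, rfl⟩ ?_
  rintro _ ⟨G, hPG, hG, rfl⟩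
  have hPinf : P (Ghat ⊓ G) := hP G (Ghat ⊓ G) hPG inf_le_right
  have hdist : editDist Ghat (Ghat ⊓ G) ≤ editDist Hhat G :=
    editDist_inf_le_editDist hHhat (Set.toFinite _)
  exact csInf_le_of_le (OrderBot.bddBelow _) ⟨Ghat ⊓ G, hPinf, le_inf hGhat hG, rfl⟩ hdist
end
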